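/- Fix s ∈ (1/2, 1) and a cutoff η as in the definition of I_N. There is a constant C > 0 (depending only on s, η) such that for every N ≥ 1 and every Schwartz function g : ℝ³ → ℂ, E(I_N g) ≤ C ( N^{2(1−s)} ‖g‖²_{Ḣ^s(ℝ³)} + ‖g‖⁴_{L⁴(ℝ³)} ). -/

import Mathlib

open MeasureTheory Real Complex Filter
open scoped FourierTransform ContDiff ENNReal

noncomputable section

abbrev E3 := EuclideanSpace ℝ (Fin 3)

/-- the `i`-th standard basis vector of `ℝ³`. -/
def e3 (i : Fin 3) : E3 := EuclideanSpace.single i (1 : ℝ)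

/-- the `i`-th spatial partial derivative. -/
def pd (g : E3 → ℂ) (i : Fin 3) (x : E3) : ℂ := fderiv ℝ g x (e3 i)

/-- the (spatial) Laplacian. -/
def lap (g : E3 → ℂ) (x : E3) : ℂ := ∑ i : Fin 3, fderiv ℝ (fun y => pd g i y) x (e3 i)

/-- the antiderivative `F(z) = ∫₀^z f(s) ds` of `f`. -/
def Fa (f : ℝ → ℝ) (z : ℝ) : ℝ := ∫ s in (0:ℝ)..z, f s

/-- `u` is a smooth decaying solution of the gNLS `i ∂ₜ u + α Δ u = μ f(|u|²) u`
on `[0,T] × ℝ³`: it is jointly smooth, every time derivative slice is a Schwartz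
function of `x`, and the equation holds pointwise on `[0,T] × ℝ³`. -/
structure IsSolution (α μ : ℝ) (f : ℝ → ℝ) (T : ℝ) (u : ℝ → E3 → ℂ) : Prop where
  smooth : ContDiff ℝ ∞ (fun p : ℝ × E3 => u p.1 p.2)
  schwartz : ∀ (k : ℕ) (t : ℝ), ∃ g : SchwartzMap E3 ℂ,
      ∀ x, iteratedDeriv k (fun s => u s x) t = g x
  eqn : ∀ t ∈ Set.Icc (0:ℝ) T, ∀ x : E3,
      Complex.I * deriv (fun s => u s x) t + (α : ℂ) * lap (u t) x
        = ((μ * f (Complex.normSq (u t x)) : ℝ) : ℂ) * u t x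

/-- the `i`-th component of the mass current `Im (conj u ∇u)`. -/
def massCur (g : E3 → ℂ) (i : Fin 3) (x : E3) : ℝ := ((starRingEnd ℂ) (g x) * pd g i x).im

/-- the Morawetz action centered at `y`. -/
def morAction (g : E3 → ℂ) (y : E3) : ℝ :=
  ∫ x : E3, ∑ i : Fin 3, massCur g i x * ((x i - y i) / ‖x - y‖)

/-- `|∇̸_y g(x)|²`, the squared norm of the angular part of the gradient. -/
def angGradSq (g : E3 → ℂ) (y x : E3) : ℝ :=
  ∑ i : Fin 3, Complex.normSq (pd g i x -
    (((x i - y i) / ‖x - y‖ : ℝ) : ℂ) *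
      ∑ j : Fin 3, (((x j - y j) / ‖x - y‖ : ℝ) : ℂ) * pd g j x)

/-- squared homogeneous Sobolev norm `‖g‖²_{Ḣ^σ}`. -/
def sobSq (σ : ℝ) (g : E3 → ℂ) : ℝ := ∫ ξ : E3, ‖ξ‖ ^ (2 * σ) * ‖𝓕 g ξ‖ ^ 2


/-- `η` is an admissible cutoff for the smoothing operator `I_N` at regularity `s`:
a smooth nonincreasing function on `[0,∞)` with values in `(0,1]`, equal to `1` for
`r ≤ 1` and to `r^{s−1}` for `r ≥ 2`. -/
def IsCutoff (s : ℝ) (η : ℝ → ℝ) : Prop :=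
  ContDiff ℝ ∞ η ∧ AntitoneOn η (Set.Ici 0) ∧ (∀ r ≥ (0:ℝ), 0 < η r ∧ η r ≤ 1) ∧
    (∀ r ≤ (1:ℝ), η r = 1) ∧ (∀ r ≥ (2:ℝ), η r = r ^ (s - 1))

/-- the smoothing operator `I_N`, a Fourier multiplier with symbol `η(|ξ|/N)`. -/
def Iop (η : ℝ → ℝ) (N : ℝ) (g : E3 → ℂ) : E3 → ℂ :=
  fun x => 𝓕⁻ (fun ξ : E3 => (η (‖ξ‖ / N) : ℂ) * 𝓕 g ξ) x

/-- the Littlewood–Paley type projection `P_M`, a Fourier multiplier with symbol `ψ(ξ/M)`. -/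
def PM (ψ : E3 → ℝ) (M : ℝ) (g : E3 → ℂ) : E3 → ℂ :=
  fun x => 𝓕⁻ (fun ξ : E3 => (ψ (M⁻¹ • ξ) : ℂ) * 𝓕 g ξ) x

/-- pointwise norm `|∇g(x)|` of the spatial gradient. -/
def gradNorm (g : E3 → ℂ) (x : E3) : ℝ := Real.sqrt (∑ i : Fin 3, Complex.normSq (pd g i x))

/-- `(q,r)` is a Schrödinger admissible pair for `ℝ^{3+1}`: `q, r ≥ 2` and
`1/q + 3/(2r) = 3/4`. -/
def SAdmissible (q r : ℝ≥0∞) : Prop := 2 ≤ q ∧ 2 ≤ r ∧ 1 / q + 3 / (2 * r) = 3 / 4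

/-- the mixed spacetime norm `‖G‖_{L^q_t L^r_x([0,T] × ℝ³)}` (of a scalar function). -/
def LqLr (q r : ℝ≥0∞) (T : ℝ) (G : ℝ → E3 → ℝ) : ℝ≥0∞ :=
  eLpNorm (fun t => (eLpNorm (G t) r volume).toReal) q (volume.restrict (Set.Icc (0:ℝ) T))

/-- `Z = sup_{(q,r) admissible} ‖∇ I_N φ‖_{L^q_t L^r_x([0,T] × ℝ³)}`. -/
def Znorm (η : ℝ → ℝ) (N T : ℝ) (φ : ℝ → E3 → ℂ) : ℝ≥0∞ :=
  ⨆ (q : ℝ≥0∞) (r : ℝ≥0∞) (_ : SAdmissible q r),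
    LqLr q r T (fun t x => gradNorm (Iop η N (φ t)) x)

/-- the modified energy `E(w) = ∫ (1/2)|∇w|² + (1/4)|w|⁴ dx`. -/
def energyE (w : E3 → ℂ) : ℝ :=
  ∫ x : E3, (1/2) * (∑ i : Fin 3, Complex.normSq (pd w i x)) + (1/4) * ‖w x‖ ^ 4

/-- squared inhomogeneous Sobolev norm `‖g‖²_{H^s}`. -/
def inhomSobSq (s : ℝ) (g : E3 → ℂ) : ℝ :=
  ∫ ξ : E3, (1 + ‖ξ‖ ^ 2) ^ s * ‖𝓕 g ξ‖ ^ 2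


/-!
The kinetic energy is controlled by Plancherel's theorem and the pointwise bound
`|ξ| η(|ξ|/N) ≤ (2N)^{1-s} |ξ|^s`. For the potential energy one needs `I_N` to be bounded on `L⁴`
uniformly in `N`. The symbol `m ξ = η(|ξ|)` satisfies `m(ξ) = q m(ξ/2)` with `q = 2^{s-1} < 1` for
`|ξ| ≥ 4`, so `ψ(ξ) = m(ξ) - q m(ξ/2)` is a test function and telescoping gives
`m(ξ) = ∑ⱼ qʲ ψ(2⁻ʲ ξ)`. Dilating a symbol preserves the `L¹` norm of its convolution kernel, hence
the series exhibits `m` as the Fourier transform of an integrable function, the symbols `m(ξ/N)`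
have kernels of the same `L¹` norm, and Young's inequality concludes.
-/

open scoped Convolution Topology

theorem lintegral_mul_rpow_le {α : Type*} [MeasurableSpace α] {μ : Measure α} {p : ℝ}
    (hp : 1 ≤ p) {k h : α → ℝ≥0∞} (hk : AEMeasurable k μ) (hh : AEMeasurable h μ) :
    (∫⁻ x, k x * h x ∂μ) ^ p ≤ (∫⁻ x, k x ∂μ) ^ (p - 1) * ∫⁻ x, k x * h x ^ p ∂μ := by
  have hp0 : 0 < p := by positivity
  have hp1 : 0 ≤ 1 - p⁻¹ := sub_nonneg.2 (inv_le_one_of_one_le₀ hp)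
  have split (x : α) : k x * h x = k x ^ (1 - p⁻¹) * (k x * h x ^ p) ^ p⁻¹ := by
    rw [ENNReal.mul_rpow_of_nonneg _ _ (by positivity), ← mul_assoc,
      ← ENNReal.rpow_add_of_nonneg _ _ hp1 (by positivity), ENNReal.rpow_rpow_inv hp0.ne',
      sub_add_cancel, ENNReal.rpow_one]
  calc (∫⁻ x, k x * h x ∂μ) ^ p
      ≤ ((∫⁻ x, k x ∂μ) ^ (1 - p⁻¹) * (∫⁻ x, k x * h x ^ p ∂μ) ^ p⁻¹) ^ p := by
        simp_rw [split]
        gcongr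
        exact ENNReal.lintegral_mul_norm_pow_le hk (hk.mul (hh.pow_const p)) hp1 (by positivity)
          (sub_add_cancel 1 p⁻¹)
    _ = (∫⁻ x, k x ∂μ) ^ (p - 1) * ∫⁻ x, k x * h x ^ p ∂μ := by
        rw [ENNReal.mul_rpow_of_nonneg _ _ hp0.le, ← ENNReal.rpow_mul,
          ENNReal.rpow_inv_rpow hp0.ne', sub_mul, one_mul, inv_mul_cancel₀ hp0.ne']

section Young

variable {G : Type*} [AddCommGroup G] [MeasurableSpace G] [MeasurableAdd₂ G] [MeasurableNeg G]
  {μ : Measure G} [SFinite μ] [μ.IsAddLeftInvariant]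

theorem lintegral_lconvolution {f g : G → ℝ≥0∞} (hf : AEMeasurable f μ) (hg : AEMeasurable g μ) :
    ∫⁻ x, (f ⋆ₗ[μ] g) x ∂μ = (∫⁻ x, f x ∂μ) * ∫⁻ x, g x ∂μ := by
  simp_rw [lconvolution_def]
  rw [lintegral_lintegral_swap (by simpa using by fun_prop), ← lintegral_mul_const'' _ hf]
  congr 1 with y
  rw [lintegral_const_mul'' _ (by fun_prop), lintegral_add_left_eq_self]

theorem lintegral_lconvolution_rpow_le {p : ℝ} (hp : 1 ≤ p) {f g : G → ℝ≥0∞}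
    (hf : AEMeasurable f μ) (hg : AEMeasurable g μ) :
    ∫⁻ x, (f ⋆ₗ[μ] g) x ^ p ∂μ ≤ (∫⁻ x, f x ∂μ) ^ p * ∫⁻ x, g x ^ p ∂μ := by
  have hgx (x : G) : AEMeasurable (fun y => g (-y + x)) μ := by
    simp_rw [neg_add_eq_sub]
    exact hg.comp_quasiMeasurePreserving (quasiMeasurePreserving_sub_left_of_right_invariant μ x)
  have rpow_split : (∫⁻ x, f x ∂μ) ^ (p - 1) * ∫⁻ x, f x ∂μ = (∫⁻ x, f x ∂μ) ^ p := by
    simpa using (ENNReal.rpow_add_of_nonneg (p - 1) 1 (sub_nonneg.2 hp) zero_le_one).symm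
  calc ∫⁻ x, (f ⋆ₗ[μ] g) x ^ p ∂μ
      ≤ ∫⁻ x, (∫⁻ y, f y ∂μ) ^ (p - 1) * (f ⋆ₗ[μ] fun y => g y ^ p) x ∂μ :=
        lintegral_mono fun x => lintegral_mul_rpow_le hp hf (hgx x)
    _ = (∫⁻ x, f x ∂μ) ^ (p - 1) * ((∫⁻ x, f x ∂μ) * ∫⁻ x, g x ^ p ∂μ) := by
        rw [lintegral_const_mul'' _ (by fun_prop), lintegral_lconvolution hf (by fun_prop)]
    _ = (∫⁻ x, f x ∂μ) ^ p * ∫⁻ x, g x ^ p ∂μ := by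
        rw [← mul_assoc, rpow_split]

end Young

theorem eLpNorm_convolution_le {𝕜 G E E' F : Type*} [NontriviallyNormedField 𝕜]
    [NormedAddCommGroup E] [NormedAddCommGroup E'] [NormedAddCommGroup F]
    [NormedSpace 𝕜 E] [NormedSpace 𝕜 E'] [NormedSpace ℝ F] [NormedSpace 𝕜 F]
    [AddCommGroup G] [MeasurableSpace G] [MeasurableAdd₂ G] [MeasurableNeg G]
    {μ : Measure G} [SFinite μ] [μ.IsAddLeftInvariant]
    (L : E →L[𝕜] E' →L[𝕜] F) {p : ℝ≥0∞} (hp : 1 ≤ p) (hp' : p ≠ ⊤) {f : G → E} {g : G → E'}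
    (hf : AEStronglyMeasurable f μ) (hg : AEStronglyMeasurable g μ) :
    eLpNorm (f ⋆[L, μ] g) p μ ≤ ‖L‖ₑ * eLpNorm f 1 μ * eLpNorm g p μ := by
  have hp1 : 1 ≤ p.toReal := by simpa using ENNReal.toReal_mono hp' hp
  have pointwise (x : G) : ‖(f ⋆[L, μ] g) x‖ₑ ≤ ‖L‖ₑ * ((‖f ·‖ₑ) ⋆ₗ[μ] (‖g ·‖ₑ)) x := by
    rw [lconvolution_def, ← lintegral_const_mul' _ _ enorm_ne_top]
    refine (enorm_integral_le_lintegral_enorm _).trans (lintegral_mono fun y => ?_)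
    rw [← mul_assoc, neg_add_eq_sub]
    exact L.le_opENorm₂ _ _
  rw [eLpNorm_one_eq_lintegral_enorm, eLpNorm_eq_lintegral_rpow_enorm_toReal (by positivity) hp',
    eLpNorm_eq_lintegral_rpow_enorm_toReal (by positivity) hp', one_div,
    ENNReal.rpow_inv_le_iff (by positivity), ENNReal.mul_rpow_of_nonneg _ _ (by positivity),
    ENNReal.mul_rpow_of_nonneg _ _ (by positivity), ENNReal.rpow_inv_rpow (by positivity)]
  calc ∫⁻ x, ‖(f ⋆[L, μ] g) x‖ₑ ^ p.toReal ∂μ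
      ≤ ∫⁻ x, ‖L‖ₑ ^ p.toReal * ((‖f ·‖ₑ) ⋆ₗ[μ] (‖g ·‖ₑ)) x ^ p.toReal ∂μ := by
        simp_rw [← ENNReal.mul_rpow_of_nonneg _ _ (zero_le_one.trans hp1)]
        exact lintegral_mono fun x => ENNReal.rpow_le_rpow (pointwise x) (by positivity)
    _ ≤ ‖L‖ₑ ^ p.toReal * (∫⁻ x, ‖f x‖ₑ ∂μ) ^ p.toReal * ∫⁻ x, ‖g x‖ₑ ^ p.toReal ∂μ := by
        rw [lintegral_const_mul' _ _ (by finiteness), mul_assoc]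
        gcongr
        exact lintegral_lconvolution_rpow_le hp1 hf.enorm hg.enorm

theorem ae_eq_tsum_toL1 {α ι E : Type*} [MeasurableSpace α] {μ : Measure α} [Countable ι]
    [NormedAddCommGroup E] [CompleteSpace E] {f : ι → α → E}
    (hf : ∀ i, Integrable (f i) μ) (hsum : Summable fun i => ∫ x, ‖f i x‖ ∂μ) :
    (∑' i, (hf i).toL1 (f i) : α →₁[μ] E) =ᵐ[μ] fun x => ∑' i, f i x := by
  have norm_toL1 (i : ι) : ‖(hf i).toL1 (f i)‖ = ∫ x, ‖f i x‖ ∂μ :=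
    L1.norm_of_fun_eq_integral_norm (hf i)
  have hfin : ∑' i, ‖(hf i).toL1 (f i)‖ₑ ≠ ⊤ :=
    tsum_enorm_ne_top_iff_summable_norm.2 (by simpa only [norm_toL1] using hsum)
  filter_upwards [Lp.coeFn_tsum hfin, ae_all_iff.2 fun i => (hf i).coeFn_toL1] with x hx hcoe
  simp only [hx, hcoe]

theorem integrable_tsum_of_summable_integral_norm {α ι E : Type*} [MeasurableSpace α]
    {μ : Measure α} [Countable ι] [NormedAddCommGroup E] [CompleteSpace E]
    {f : ι → α → E} (hf : ∀ i, Integrable (f i) μ) (hsum : Summable fun i => ∫ x, ‖f i x‖ ∂μ) :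
    Integrable (fun x => ∑' i, f i x) μ :=
  (L1.integrable_coeFn _).congr (ae_eq_tsum_toL1 hf hsum)

theorem integral_norm_tsum_le {α ι E : Type*} [MeasurableSpace α]
    {μ : Measure α} [Countable ι] [NormedAddCommGroup E] [CompleteSpace E]
    {f : ι → α → E} (hf : ∀ i, Integrable (f i) μ) (hsum : Summable fun i => ∫ x, ‖f i x‖ ∂μ) :
    ∫ x, ‖∑' i, f i x‖ ∂μ ≤ ∑' i, ∫ x, ‖f i x‖ ∂μ := by
  have norm_toL1 (i : ι) := L1.norm_of_fun_eq_integral_norm (hf i)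
  calc ∫ x, ‖∑' i, f i x‖ ∂μ = ‖(∑' i, (hf i).toL1 (f i) : α →₁[μ] E)‖ := by
        rw [L1.norm_eq_integral_norm]
        exact integral_congr_ae ((ae_eq_tsum_toL1 hf hsum).fun_comp norm).symm
    _ ≤ ∑' i, ‖(hf i).toL1 (f i)‖ := norm_tsum_le_tsum_norm (by simpa only [norm_toL1] using hsum)
    _ = ∑' i, ∫ x, ‖f i x‖ ∂μ := tsum_congr norm_toL1

section L1Kernel

variable {V F : Type*} [NormedAddCommGroup V] [InnerProductSpace ℝ V] [FiniteDimensional ℝ V]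
  [MeasurableSpace V] [BorelSpace V] [NormedAddCommGroup F] [NormedSpace ℂ F]

/-- `m` is the Fourier transform of an integrable function of `L¹` norm at most `A`, so that the
Fourier multiplier with symbol `m` is convolution with that function. -/
def HasL1Kernel (A : ℝ) (m : V → F) : Prop :=
  ∃ K : V → F, Integrable K ∧ ∫ x, ‖K x‖ ≤ A ∧ 𝓕 K = m

namespace HasL1Kernel

variable {A : ℝ} {m : V → F}

theorem nonneg (h : HasL1Kernel A m) : 0 ≤ A := by
  obtain ⟨K, -, hKA, -⟩ := h
  exact (integral_nonneg fun x => norm_nonneg (K x)).trans hKA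

theorem const_smul (h : HasL1Kernel A m) (c : ℝ) :
    HasL1Kernel (|c| * A) fun ξ => c • m ξ := by
  obtain ⟨K, hK, hKA, rfl⟩ := h
  refine ⟨c • K, hK.smul c, ?_, ?_⟩
  · simp only [Pi.smul_apply, norm_smul, Real.norm_eq_abs, integral_const_mul]
    gcongr
  · ext ξ
    simp only [Real.fourier_eq, Pi.smul_apply, smul_comm _ c, integral_smul]

theorem comp_smul (h : HasL1Kernel A m) {c : ℝ} (hc : c ≠ 0) :
    HasL1Kernel A fun ξ => m (c • ξ) := by
  obtain ⟨K, hK, hKA, rfl⟩ := h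
  set a : ℝ := |c ^ Module.finrank ℝ V|
  have ha : 0 < a := abs_pos.2 (pow_ne_zero _ hc)
  refine ⟨fun x => a⁻¹ • K (c⁻¹ • x), (hK.comp_smul (inv_ne_zero hc)).smul a⁻¹, ?_, ?_⟩
  · simp only [norm_smul, integral_const_mul]
    rwa [Measure.integral_comp_inv_smul volume (fun x => ‖K x‖) c, smul_eq_mul, Real.norm_eq_abs,
      abs_of_pos (inv_pos.2 ha), inv_mul_cancel_left₀ ha.ne']
  · ext ξ
    have change_var :=
      Measure.integral_comp_inv_smul volume (fun v : V => 𝐞 (-inner ℝ (c • v) ξ) • K v) c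
    simp only [smul_inv_smul₀ hc] at change_var
    simp only [Real.fourier_eq, smul_comm _ a⁻¹, integral_smul]
    rw [change_var, inv_smul_smul₀ ha.ne']
    simp only [real_inner_smul_left, real_inner_smul_right]

theorem hasSum {ι : Type*} [Countable ι] [CompleteSpace F] {A : ι → ℝ} {m : ι → V → F} {M : V → F}
    (h : ∀ i, HasL1Kernel (A i) (m i)) (hA : Summable A) (hM : ∀ ξ, HasSum (fun i => m i ξ) (M ξ)) :
    HasL1Kernel (∑' i, A i) M := by
  choose K hK hKA hKm using h
  have hsum : Summable fun i => ∫ x, ‖K i x‖ := .of_nonneg_of_le (fun i => by positivity) hKA hA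
  refine ⟨fun x => ∑' i, K i x, integrable_tsum_of_summable_integral_norm hK hsum,
    (integral_norm_tsum_le hK hsum).trans (hsum.tsum_le_tsum hKA hA), ?_⟩
  ext ξ
  have hasSum_integral := hasSum_integral_of_summable_integral_norm
    (F := fun i x => 𝐞 (-inner ℝ x ξ) • K i x) (μ := volume)
    (fun i => (Real.fourierIntegral_convergent_iff ξ).2 (hK i))
    (by simpa [Circle.norm_smul] using hsum)
  have tsum_smul (x : V) : ∑' i, 𝐞 (-inner ℝ x ξ) • K i x = 𝐞 (-inner ℝ x ξ) • ∑' i, K i x :=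
    tsum_const_smul' _
  simp only [tsum_smul, ← Real.fourier_eq, hKm] at hasSum_integral
  exact hasSum_integral.unique (hM ξ)

end HasL1Kernel

theorem exists_hasL1Kernel_of_hasCompactSupport [CompleteSpace F] {m : V → F} (hm : ContDiff ℝ ∞ m)
    (hsupp : HasCompactSupport m) : ∃ A, HasL1Kernel A m := by
  let f : SchwartzMap V F := hsupp.toSchwartzMap hm
  refine ⟨∫ x, ‖(𝓕⁻ f) x‖, fun x => (𝓕⁻ f) x, (𝓕⁻ f).integrable, le_rfl, ?_⟩
  rw [← SchwartzMap.fourier_coe, FourierTransform.fourier_fourierInv_eq]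
  rfl

theorem norm_fourier_le_integral_norm (K : V → F) (ξ : V) : ‖𝓕 K ξ‖ ≤ ∫ x, ‖K x‖ :=
  VectorFourier.norm_fourierIntegral_le_integral_norm _ _ _ _ _

theorem fourierInv_fourier_smul_fourier [CompleteSpace F] {K : V → ℂ} (hK : Integrable K)
    (g : SchwartzMap V F) :
    𝓕⁻ (fun ξ => 𝓕 K ξ • 𝓕 (g : V → F) ξ) = K ⋆[ContinuousLinearMap.lsmul ℂ ℂ] g := by
  have integrable_symbol : Integrable fun ξ => 𝓕 K ξ • 𝓕 (g : V → F) ξ := by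
    have continuous_fourier : Continuous (𝓕 K) :=
      VectorFourier.fourierIntegral_continuous Real.continuous_fourierChar continuous_inner hK
    rw [← SchwartzMap.fourier_coe]
    exact (𝓕 g).integrable.bdd_smul _ continuous_fourier.aestronglyMeasurable
      (.of_forall (norm_fourier_le_integral_norm K))
  have bounded : BddAbove (Set.range fun x => ‖g x‖) :=
    ⟨SchwartzMap.seminorm ℝ 0 0 g, Set.forall_mem_range.2 (SchwartzMap.norm_le_seminorm ℝ g)⟩
  have fourier_conv : 𝓕 (K ⋆[ContinuousLinearMap.lsmul ℂ ℂ] g) =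
      fun ξ => 𝓕 K ξ • 𝓕 (g : V → F) ξ :=
    funext (Real.fourier_smul_convolution_eq hK g.integrable)
  rw [← fourier_conv]
  exact (bounded.continuous_convolution_right_of_integrable _ hK g.continuous).fourierInv_fourier_eq
    (hK.integrable_convolution _ g.integrable) (by rwa [fourier_conv])

theorem HasL1Kernel.eLpNorm_fourierInv_smul_le [CompleteSpace F] {A : ℝ} {m : V → ℂ}
    (h : HasL1Kernel A m) {p : ℝ≥0∞} (hp : 1 ≤ p) (hp' : p ≠ ⊤) (g : SchwartzMap V F) :
    eLpNorm (𝓕⁻ fun ξ => m ξ • 𝓕 (g : V → F) ξ) p ≤ ENNReal.ofReal A * eLpNorm g p := by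
  obtain ⟨K, hK, hKA, rfl⟩ := h
  rw [fourierInv_fourier_smul_fourier hK g]
  have enorm_lsmul : ‖(ContinuousLinearMap.lsmul ℂ ℂ : ℂ →L[ℂ] F →L[ℂ] F)‖ₑ ≤ 1 := by
    rw [← ofReal_norm]
    exact ENNReal.ofReal_le_one.2 ContinuousLinearMap.opNorm_lsmul_le
  have eLpNorm_kernel : eLpNorm K 1 ≤ ENNReal.ofReal A := by
    rw [eLpNorm_one_eq_lintegral_enorm, ← ofReal_integral_norm_eq_lintegral_enorm hK]
    exact ENNReal.ofReal_le_ofReal hKA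
  refine (eLpNorm_convolution_le _ hp hp' hK.1 g.continuous.aestronglyMeasurable).trans ?_
  gcongr
  exact (mul_le_mul' enorm_lsmul eLpNorm_kernel).trans_eq (one_mul _)

end L1Kernel

section DyadicSymbol

/-- A smooth symbol satisfying `m (2ξ) = q m ξ` for all large `ξ`, i.e. asymptotically
homogeneous of degree `log₂ q` under dyadic dilations. -/
structure IsDyadicSymbol {V F : Type*} [NormedAddCommGroup V] [NormedSpace ℝ V]
    [NormedAddCommGroup F] [NormedSpace ℝ F] (q : ℝ) (m : V → F) : Prop where
  contDiff : ContDiff ℝ ∞ m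
  hasCompactSupport : HasCompactSupport fun ξ => m ξ - q • m ((2 : ℝ)⁻¹ • ξ)

theorem tendsto_half_pow_smul {V : Type*} [NormedAddCommGroup V] [NormedSpace ℝ V] (x : V) :
    Tendsto (fun n : ℕ => ((2 : ℝ)⁻¹ ^ n) • x) atTop (𝓝 0) := by
  have tendsto_half_pow : Tendsto (fun n : ℕ => (2 : ℝ)⁻¹ ^ n) atTop (𝓝 0) :=
    tendsto_pow_atTop_nhds_zero_of_lt_one (by norm_num) (by norm_num)
  simpa only [zero_smul] using tendsto_half_pow.smul_const x

theorem le_div_one_sub_of_le_add_mul_comp_half {V : Type*} [NormedAddCommGroup V]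
    [NormedSpace ℝ V] {u : V → ℝ} {q B : ℝ} (hu : ContinuousAt u 0) (hq : 0 ≤ q) (hq1 : q < 1)
    (h : ∀ x, u x ≤ B + q * u ((2 : ℝ)⁻¹ • x)) (x : V) : u x ≤ B / (1 - q) := by
  set b := B / (1 - q) with hb
  have fixed_point : B = b - q * b := by rw [hb]; field_simp [(sub_pos.2 hq1).ne']
  have iterate (n : ℕ) : u x - b ≤ q ^ n * (u ((2 : ℝ)⁻¹ ^ n • x) - b) := by
    induction n with
    | zero => simp
    | succ n ih =>
      refine ih.trans ?_
      rw [pow_succ, pow_succ', mul_smul, mul_assoc]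
      gcongr
      linarith [h ((2 : ℝ)⁻¹ ^ n • x)]
  have remainder_tendsto :
      Tendsto (fun n : ℕ => q ^ n * (u ((2 : ℝ)⁻¹ ^ n • x) - b)) atTop (𝓝 0) := by
    simpa using (tendsto_pow_atTop_nhds_zero_of_lt_one hq hq1).mul
      ((hu.tendsto.comp (tendsto_half_pow_smul x)).sub_const b)
  exact sub_nonpos.1 (ge_of_tendsto' remainder_tendsto iterate)

namespace IsDyadicSymbol

variable {V F : Type*} [NormedAddCommGroup V] [NormedAddCommGroup F] {q : ℝ} {m : V → F}

section Real

variable [NormedSpace ℝ V] [NormedSpace ℝ F]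

theorem contDiff_sub (h : IsDyadicSymbol q m) :
    ContDiff ℝ ∞ fun ξ => m ξ - q • m ((2 : ℝ)⁻¹ • ξ) :=
  h.contDiff.sub ((h.contDiff.comp (contDiff_const_smul _)).const_smul q)

theorem hasTemperateGrowth (h : IsDyadicSymbol q m) (hq : 0 ≤ q) (hq1 : q < 1) :
    m.HasTemperateGrowth := by
  refine ⟨h.contDiff, fun n => ?_⟩
  have hn : (n : WithTop ℕ∞) ≤ (⊤ : ℕ∞) := by exact_mod_cast le_top
  obtain ⟨B, hB⟩ := (h.hasCompactSupport.iteratedFDeriv n).exists_bound_of_continuous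
    (h.contDiff_sub.continuous_iteratedFDeriv hn)
  have iteratedFDeriv_sub (ξ : V) : iteratedFDeriv ℝ n (fun ξ => m ξ - q • m ((2 : ℝ)⁻¹ • ξ)) ξ =
      iteratedFDeriv ℝ n m ξ - (q * 2⁻¹ ^ n) • iteratedFDeriv ℝ n m ((2 : ℝ)⁻¹ • ξ) := by
    have hm := h.contDiff.of_le hn
    have hm_half : ContDiff ℝ n fun ξ : V => m ((2 : ℝ)⁻¹ • ξ) := hm.comp (contDiff_const_smul _)
    rw [fun_iteratedFDeriv_sub_apply hm.contDiffAt (hm_half.const_smul q).contDiffAt,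
      iteratedFDeriv_const_smul_apply' hm_half.contDiffAt, iteratedFDeriv_comp_const_smul _ hm,
      mul_smul]
  have recursion (ξ : V) : ‖iteratedFDeriv ℝ n m ξ‖ ≤
      B + q * ‖iteratedFDeriv ℝ n m ((2 : ℝ)⁻¹ • ξ)‖ := by
    have hq_half : q * 2⁻¹ ^ n ≤ q :=
      mul_le_of_le_one_right hq (pow_le_one₀ (by norm_num) (by norm_num))
    calc ‖iteratedFDeriv ℝ n m ξ‖
        ≤ ‖iteratedFDeriv ℝ n (fun ξ => m ξ - q • m ((2 : ℝ)⁻¹ • ξ)) ξ‖ +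
            ‖(q * 2⁻¹ ^ n) • iteratedFDeriv ℝ n m ((2 : ℝ)⁻¹ • ξ)‖ := by
          rw [iteratedFDeriv_sub]
          exact norm_le_norm_sub_add _ _
      _ ≤ B + q * ‖iteratedFDeriv ℝ n m ((2 : ℝ)⁻¹ • ξ)‖ := by
          rw [norm_smul, Real.norm_of_nonneg (by positivity)]
          gcongr
          exact hB ξ
  refine ⟨0, B / (1 - q), fun ξ => ?_⟩
  simpa using le_div_one_sub_of_le_add_mul_comp_half
    (h.contDiff.continuous_iteratedFDeriv hn).norm.continuousAt hq hq1 recursion ξ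

theorem hasSum (h : IsDyadicSymbol q m) (hq : 0 ≤ q) (hq1 : q < 1) (ξ : V) :
    HasSum (fun j : ℕ => q ^ j •
      (m ((2 : ℝ)⁻¹ ^ j • ξ) - q • m ((2 : ℝ)⁻¹ • (2 : ℝ)⁻¹ ^ j • ξ))) (m ξ) := by
  have telescope (n : ℕ) : ∑ j ∈ Finset.range n, q ^ j •
      (m ((2 : ℝ)⁻¹ ^ j • ξ) - q • m ((2 : ℝ)⁻¹ • (2 : ℝ)⁻¹ ^ j • ξ)) =
        m ξ - q ^ n • m ((2 : ℝ)⁻¹ ^ n • ξ) := by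
    simp only [smul_sub, smul_smul, ← pow_succ, ← pow_succ']
    simpa using Finset.sum_range_sub' (fun j => q ^ j • m ((2 : ℝ)⁻¹ ^ j • ξ)) n
  have remainder_tendsto :
      Tendsto (fun n : ℕ => q ^ n • m ((2 : ℝ)⁻¹ ^ n • ξ)) atTop (𝓝 0) := by
    simpa using (tendsto_pow_atTop_nhds_zero_of_lt_one hq hq1).smul
      ((h.contDiff.continuous.tendsto 0).comp (tendsto_half_pow_smul ξ))
  obtain ⟨B, hB⟩ := h.hasCompactSupport.exists_bound_of_continuous h.contDiff_sub.continuous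
  have summable_norm : Summable fun j : ℕ => ‖q ^ j •
      (m ((2 : ℝ)⁻¹ ^ j • ξ) - q • m ((2 : ℝ)⁻¹ • (2 : ℝ)⁻¹ ^ j • ξ))‖ := by
    refine .of_nonneg_of_le (fun _ => norm_nonneg _) (fun j => ?_)
      ((summable_geometric_of_lt_one hq hq1).mul_right B)
    rw [norm_smul, Real.norm_of_nonneg (pow_nonneg hq j)]
    gcongr
    exact hB _
  rw [hasSum_iff_tendsto_nat_of_summable_norm summable_norm]
  simpa only [telescope, sub_zero] using remainder_tendsto.const_sub (m ξ)

end Real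

theorem exists_hasL1Kernel [InnerProductSpace ℝ V] [FiniteDimensional ℝ V] [MeasurableSpace V]
    [BorelSpace V] [NormedSpace ℂ F] [CompleteSpace F] (h : IsDyadicSymbol q m) (hq : 0 ≤ q)
    (hq1 : q < 1) : ∃ A, HasL1Kernel A m := by
  obtain ⟨A, hA⟩ := exists_hasL1Kernel_of_hasCompactSupport h.contDiff_sub h.hasCompactSupport
  have hscale (j : ℕ) : (2 : ℝ)⁻¹ ^ j ≠ 0 := by positivity
  refine ⟨_, HasL1Kernel.hasSum (fun j => (hA.comp_smul (hscale j)).const_smul (q ^ j)) ?_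
    (h.hasSum hq hq1)⟩
  simp_rw [abs_of_nonneg (pow_nonneg hq _)]
  exact (summable_geometric_of_lt_one hq hq1).mul_right A

end IsDyadicSymbol

end DyadicSymbol

theorem norm_inv_smul_eq_div {V : Type*} [NormedAddCommGroup V] [NormedSpace ℝ V] {c : ℝ}
    (hc : 0 < c) (x : V) : ‖c⁻¹ • x‖ = ‖x‖ / c := by
  rw [norm_smul, Real.norm_of_nonneg (by positivity), inv_mul_eq_div]

theorem two_rpow_sub_one_lt_one {s : ℝ} (hs : s < 1) : (2 : ℝ) ^ (s - 1) < 1 :=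
  Real.rpow_lt_one_of_one_lt_of_neg one_lt_two (sub_neg.2 hs)

section Cutoff

namespace IsCutoff

variable {s : ℝ} {η : ℝ → ℝ}

theorem isDyadicSymbol {V : Type*} [NormedAddCommGroup V] [InnerProductSpace ℝ V]
    [FiniteDimensional ℝ V] (hη : IsCutoff s η) :
    IsDyadicSymbol (2 ^ (s - 1) : ℝ) fun ξ : V => (η ‖ξ‖ : ℂ) := by
  obtain ⟨smooth, -, -, eq_one, eq_rpow⟩ := hη
  refine ⟨Complex.ofRealCLM.contDiff.comp (contDiff_iff_contDiffAt.2 fun ξ => ?_),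
    .intro (isCompact_closedBall 0 4) fun ξ hξ => ?_⟩
  · rcases eq_or_ne ξ 0 with rfl | hξ
    · refine (contDiffAt_const (c := (1 : ℝ))).congr_of_eventuallyEq ?_
      filter_upwards [Metric.closedBall_mem_nhds 0 one_pos] with ξ hξ
      exact eq_one _ (mem_closedBall_zero_iff.1 hξ)
    · exact smooth.contDiffAt.comp ξ (contDiffAt_norm ℝ hξ)
  · have hξ4 : 4 < ‖ξ‖ := by simpa using hξ
    rw [norm_inv_smul_eq_div two_pos, eq_rpow _ (by linarith), eq_rpow _ (by linarith),
      Complex.real_smul, ← Complex.ofReal_mul, ← Real.mul_rpow (by norm_num) (by positivity),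
      mul_div_cancel₀ _ two_ne_zero, sub_self]

theorem hasTemperateGrowth {V : Type*} [NormedAddCommGroup V] [InnerProductSpace ℝ V]
    [FiniteDimensional ℝ V] (hη : IsCutoff s η) (hs : s < 1) {N : ℝ} (hN : 0 < N) :
    (fun ξ : V => (η (‖ξ‖ / N) : ℂ)).HasTemperateGrowth := by
  simp_rw [← norm_inv_smul_eq_div hN]
  exact (hη.isDyadicSymbol.hasTemperateGrowth (by positivity) (two_rpow_sub_one_lt_one hs)).comp
    (N⁻¹ • ContinuousLinearMap.id ℝ V).hasTemperateGrowth

theorem exists_forall_hasL1Kernel {V : Type*} [NormedAddCommGroup V] [InnerProductSpace ℝ V]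
    [FiniteDimensional ℝ V] [MeasurableSpace V] [BorelSpace V] (hη : IsCutoff s η) (hs : s < 1) :
    ∃ A, ∀ N > 0, HasL1Kernel A fun ξ : V => (η (‖ξ‖ / N) : ℂ) := by
  obtain ⟨A, hA⟩ :=
    hη.isDyadicSymbol (V := V) |>.exists_hasL1Kernel (by positivity) (two_rpow_sub_one_lt_one hs)
  refine ⟨A, fun N hN => ?_⟩
  simp_rw [← norm_inv_smul_eq_div hN]
  exact hA.comp_smul (inv_ne_zero hN.ne')

theorem rpow_mul_le (hη : IsCutoff s η) (hs : s ≤ 1) {t : ℝ} (ht : 0 ≤ t) :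
    t ^ (1 - s) * η t ≤ 2 ^ (1 - s) := by
  obtain ⟨-, -, bounds, -, eq_rpow⟩ := hη
  have hs' : 0 ≤ 1 - s := sub_nonneg.2 hs
  rcases le_total t 2 with ht2 | ht2
  · calc t ^ (1 - s) * η t ≤ t ^ (1 - s) := mul_le_of_le_one_right (by positivity) (bounds t ht).2
      _ ≤ 2 ^ (1 - s) := by gcongr
  · rw [eq_rpow t ht2, ← Real.rpow_add (by linarith), sub_add_sub_cancel, sub_self, Real.rpow_zero]
    exact Real.one_le_rpow one_le_two hs'

theorem mul_comp_div_le (hη : IsCutoff s η) (hs : s ≤ 1) {N r : ℝ} (hN : 0 < N) (hr : 0 ≤ r) :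
    r * η (r / N) ≤ (2 * N) ^ (1 - s) * r ^ s := by
  rcases hr.eq_or_lt with rfl | hr
  · rw [zero_mul]
    positivity
  · have factor : r * η (r / N) = N ^ (1 - s) * r ^ s * ((r / N) ^ (1 - s) * η (r / N)) := by
      have rpow_split : r = r ^ s * r ^ (1 - s) := by
        rw [← Real.rpow_add hr, add_sub_cancel, Real.rpow_one]
      rw [Real.div_rpow hr.le hN.le]
      nth_rw 1 [rpow_split]
      field_simp
    rw [factor, Real.mul_rpow zero_le_two hN.le]
    calc N ^ (1 - s) * r ^ s * ((r / N) ^ (1 - s) * η (r / N))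
        ≤ N ^ (1 - s) * r ^ s * 2 ^ (1 - s) := by
          gcongr
          exact hη.rpow_mul_le hs (by positivity)
      _ = 2 ^ (1 - s) * N ^ (1 - s) * r ^ s := by ring

theorem sq_mul_comp_div_sq_le (hη : IsCutoff s η) (hs : s ≤ 1) {N r : ℝ} (hN : 0 < N)
    (hr : 0 ≤ r) :
    r ^ 2 * η (r / N) ^ 2 ≤ 2 ^ (2 * (1 - s)) * N ^ (2 * (1 - s)) * r ^ (2 * s) := by
  have hη0 : 0 < η (r / N) := (hη.2.2.1 _ (by positivity)).1
  have rpow_two_mul {a : ℝ} (ha : 0 ≤ a) (b : ℝ) : a ^ (2 * b) = (a ^ b) ^ 2 := by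
    rw [mul_comm, Real.rpow_mul ha, Real.rpow_two]
  rw [← Real.mul_rpow zero_le_two hN.le, rpow_two_mul (by positivity), rpow_two_mul hr,
    ← mul_pow, ← mul_pow]
  exact pow_le_pow_left₀ (by positivity) (hη.mul_comp_div_le hs hN hr) 2

end IsCutoff

end Cutoff

section FourierMultiplier

open scoped SchwartzMap

theorem integral_norm_pow_eq_toReal_eLpNorm_pow {α E : Type*} [MeasurableSpace α] {μ : Measure α}
    [NormedAddCommGroup E] {f : α → E} (hf : AEStronglyMeasurable f μ) {p : ℕ} (hp : p ≠ 0) :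
    ∫ x, ‖f x‖ ^ p ∂μ = (eLpNorm f p μ).toReal ^ p := by
  have integral_nonneg : 0 ≤ ∫ x, ‖f x‖ ^ p ∂μ := by positivity
  rw [toReal_eLpNorm hf, lpNorm_eq_integral_norm_rpow_toReal (by exact_mod_cast hp)
    (ENNReal.natCast_ne_top p) hf]
  simp only [ENNReal.toReal_natCast, Real.rpow_natCast]
  exact (Real.rpow_inv_natCast_pow integral_nonneg hp).symm

theorem integral_norm_pow_le_of_eLpNorm_le {α E E' : Type*} [MeasurableSpace α] {μ : Measure α}
    [NormedAddCommGroup E] [NormedAddCommGroup E'] {f : α → E} {g : α → E'} {A : ℝ} (hA : 0 ≤ A)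
    {p : ℕ} (hp : p ≠ 0) (hf : AEStronglyMeasurable f μ) (hg : MemLp g p μ)
    (h : eLpNorm f p μ ≤ ENNReal.ofReal A * eLpNorm g p μ) :
    ∫ x, ‖f x‖ ^ p ∂μ ≤ A ^ p * ∫ x, ‖g x‖ ^ p ∂μ := by
  rw [integral_norm_pow_eq_toReal_eLpNorm_pow hf hp,
    integral_norm_pow_eq_toReal_eLpNorm_pow hg.1 hp, ← mul_pow, ← ENNReal.toReal_ofReal hA,
    ← ENNReal.toReal_mul]
  exact pow_le_pow_left₀ ENNReal.toReal_nonneg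
    (ENNReal.toReal_mono (ENNReal.mul_ne_top ENNReal.ofReal_ne_top hg.eLpNorm_ne_top) h) p

variable {V F : Type*} [NormedAddCommGroup V] [InnerProductSpace ℝ V] [FiniteDimensional ℝ V]
  [MeasurableSpace V] [BorelSpace V] [NormedAddCommGroup F] [NormedSpace ℂ F] {m : V → ℂ}

theorem coe_fourierMultiplierCLM (hm : m.HasTemperateGrowth) (g : 𝓢(V, F)) :
    ⇑(SchwartzMap.fourierMultiplierCLM F m g) = 𝓕⁻ fun ξ => m ξ • 𝓕 (g : V → F) ξ := by
  rw [SchwartzMap.fourierMultiplierCLM_apply, SchwartzMap.fourierInv_coe]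
  congr 1 with ξ
  rw [SchwartzMap.smulLeftCLM_apply_apply hm, SchwartzMap.fourier_coe]

variable [CompleteSpace F]

theorem fourier_fourierMultiplierCLM_apply (hm : m.HasTemperateGrowth) (g : 𝓢(V, F)) (ξ : V) :
    𝓕 (SchwartzMap.fourierMultiplierCLM F m g) ξ = m ξ • 𝓕 g ξ := by
  rw [SchwartzMap.fourierMultiplierCLM_apply, FourierTransform.fourier_fourierInv_eq,
    SchwartzMap.smulLeftCLM_apply_apply hm]

theorem HasL1Kernel.integral_norm_fourierMultiplierCLM_pow_le {A : ℝ} (h : HasL1Kernel A m)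
    (hm : m.HasTemperateGrowth) {p : ℕ} (hp : p ≠ 0) (g : 𝓢(V, F)) :
    ∫ x, ‖SchwartzMap.fourierMultiplierCLM F m g x‖ ^ p ≤ A ^ p * ∫ x, ‖g x‖ ^ p := by
  refine integral_norm_pow_le_of_eLpNorm_le h.nonneg hp
    (SchwartzMap.continuous _).aestronglyMeasurable (g.memLp p) ?_
  rw [coe_fourierMultiplierCLM hm]
  exact h.eLpNorm_fourierInv_smul_le (by exact_mod_cast Nat.one_le_iff_ne_zero.2 hp)
    (ENNReal.natCast_ne_top p) g

end FourierMultiplier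

section Energy

open scoped SchwartzMap LineDeriv

variable {V : Type*} [NormedAddCommGroup V] [InnerProductSpace ℝ V] [FiniteDimensional ℝ V]
  [MeasurableSpace V] [BorelSpace V]

theorem integrable_norm_rpow_mul_norm_sq {F : Type*} [NormedAddCommGroup F] [NormedSpace ℝ F]
    {σ : ℝ} (hσ : 0 ≤ σ) (f : 𝓢(V, F)) : Integrable fun ξ => ‖ξ‖ ^ (2 * σ) * ‖f ξ‖ ^ 2 := by
  let weighted := SchwartzMap.smulLeftCLM F (fun ξ : V => (1 + ‖ξ‖ ^ 2) ^ (σ / 2)) f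
  have integrable_weighted : Integrable fun ξ => ‖weighted ξ‖ ^ 2 :=
    (weighted.memLp 2).integrable_norm_pow two_ne_zero
  refine integrable_weighted.mono' ?_ (.of_forall fun ξ => ?_)
  · have continuous_weight : Continuous fun ξ : V => ‖ξ‖ ^ (2 * σ) :=
      continuous_norm.rpow_const fun _ => .inr (by positivity)
    exact (continuous_weight.mul (f.continuous.norm.pow 2)).aestronglyMeasurable
  · have weighted_apply : ‖weighted ξ‖ ^ 2 = (1 + ‖ξ‖ ^ 2) ^ σ * ‖f ξ‖ ^ 2 := by
      rw [SchwartzMap.smulLeftCLM_apply_apply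
          (Function.hasTemperateGrowth_one_add_norm_sq_rpow V (σ / 2)),
        norm_smul, Real.norm_of_nonneg (by positivity), mul_pow,
        ← Real.rpow_mul_natCast (by positivity), Nat.cast_ofNat, div_mul_cancel₀ _ two_ne_zero]
    rw [Real.norm_of_nonneg (by positivity), weighted_apply, Real.rpow_mul (norm_nonneg ξ),
      Real.rpow_two]
    gcongr
    exact le_add_of_nonneg_left zero_le_one

variable {H ι : Type*} [NormedAddCommGroup H] [InnerProductSpace ℂ H] [CompleteSpace H]
  [Fintype ι]

theorem integral_sum_norm_sq_lineDeriv (b : OrthonormalBasis ι ℝ V) (w : 𝓢(V, H)) :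
    ∫ x, ∑ i, ‖∂_{b i} w x‖ ^ 2 = (2 * π) ^ 2 * ∫ ξ, ‖ξ‖ ^ 2 * ‖𝓕 w ξ‖ ^ 2 := by
  have integrable_norm_sq (f : 𝓢(V, H)) : Integrable fun x => ‖f x‖ ^ 2 :=
    (f.memLp 2).integrable_norm_pow two_ne_zero
  have norm_sq_fourier (i : ι) (ξ : V) :
      ‖𝓕 (∂_{b i} w) ξ‖ ^ 2 = (2 * π) ^ 2 * (inner ℝ ξ (b i) ^ 2 * ‖𝓕 w ξ‖ ^ 2) := by
    have inner_growth : (inner ℝ · (b i) : V → ℝ).HasTemperateGrowth := by fun_prop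
    rw [SchwartzMap.fourier_lineDerivOp_eq, smul_apply,
      SchwartzMap.smulLeftCLM_apply_apply inner_growth, norm_smul, norm_smul, mul_pow, mul_pow]
    simp [abs_of_pos Real.pi_pos]
  calc ∫ x, ∑ i, ‖∂_{b i} w x‖ ^ 2
      = ∫ ξ, ∑ i, ‖𝓕 (∂_{b i} w) ξ‖ ^ 2 := by
        rw [integral_finsetSum _ fun i _ => integrable_norm_sq _,
          integral_finsetSum _ fun i _ => integrable_norm_sq _]
        simp_rw [SchwartzMap.integral_norm_sq_fourier]
    _ = (2 * π) ^ 2 * ∫ ξ, ‖ξ‖ ^ 2 * ‖𝓕 w ξ‖ ^ 2 := by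
        simp_rw [norm_sq_fourier, ← Finset.mul_sum, ← Finset.sum_mul, b.sum_sq_inner_left,
          integral_const_mul]

/-- The smoothing operator `I_N` on Schwartz functions, with symbol `η (|ξ| / N)`. As for
`SchwartzMap.fourierMultiplierCLM`, its value is `0` when the symbol is not of temperate growth. -/
def smoothingCLM (F : Type*) [NormedAddCommGroup F] [NormedSpace ℂ F] (η : ℝ → ℝ) (N : ℝ) :
    𝓢(V, F) →L[ℂ] 𝓢(V, F) :=
  SchwartzMap.fourierMultiplierCLM F fun ξ => (η (‖ξ‖ / N) : ℂ)

namespace IsCutoff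

variable {s : ℝ} {η : ℝ → ℝ}

theorem integral_sum_norm_sq_lineDeriv_smoothingCLM_le (hη : IsCutoff s η) (hs0 : 0 ≤ s)
    (hs1 : s < 1) {N : ℝ} (hN : 0 < N) (b : OrthonormalBasis ι ℝ V) (g : 𝓢(V, H)) :
    ∫ x, ∑ i, ‖∂_{b i} (smoothingCLM H η N g) x‖ ^ 2 ≤
      (2 * π) ^ 2 * 2 ^ (2 * (1 - s)) *
        (N ^ (2 * (1 - s)) * ∫ ξ, ‖ξ‖ ^ (2 * s) * ‖𝓕 g ξ‖ ^ 2) := by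
  rw [integral_sum_norm_sq_lineDeriv, mul_assoc]
  gcongr
  rw [← mul_assoc, ← integral_const_mul]
  refine integral_mono_of_nonneg (.of_forall fun ξ => by positivity)
    ((integrable_norm_rpow_mul_norm_sq hs0 _).const_mul _) (.of_forall fun ξ => ?_)
  simp only [smoothingCLM, fourier_fourierMultiplierCLM_apply (hη.hasTemperateGrowth hs1 hN)]
  rw [norm_smul, Complex.norm_real, Real.norm_eq_abs, mul_pow, sq_abs, ← mul_assoc, ← mul_assoc]
  exact mul_le_mul_of_nonneg_right (hη.sq_mul_comp_div_sq_le hs1.le hN (norm_nonneg ξ))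
    (by positivity)

theorem exists_forall_integral_norm_smoothingCLM_pow_le {F : Type*} [NormedAddCommGroup F]
    [NormedSpace ℂ F] [CompleteSpace F] (hη : IsCutoff s η) (hs : s < 1) :
    ∃ A : ℝ, ∀ N > 0, ∀ p : ℕ, p ≠ 0 → ∀ g : 𝓢(V, F),
      ∫ x, ‖smoothingCLM F η N g x‖ ^ p ≤ A ^ p * ∫ x, ‖g x‖ ^ p := by
  obtain ⟨A, hA⟩ := hη.exists_forall_hasL1Kernel (V := V) hs
  exact ⟨A, fun N hN p hp =>
    (hA N hN).integral_norm_fourierMultiplierCLM_pow_le (hη.hasTemperateGrowth hs hN) hp⟩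

theorem energyE_Iop (hη : IsCutoff s η) (hs : s < 1) {N : ℝ} (hN : 0 < N) (g : 𝓢(E3, ℂ)) :
    energyE (Iop η N g) =
      ∫ x, 1 / 2 * ∑ i, ‖∂_{EuclideanSpace.basisFun (Fin 3) ℝ i} (smoothingCLM ℂ η N g) x‖ ^ 2 +
        1 / 4 * ‖smoothingCLM ℂ η N g x‖ ^ 4 := by
  have Iop_eq : Iop η N g = smoothingCLM ℂ η N g :=
    (coe_fourierMultiplierCLM (hη.hasTemperateGrowth hs hN) g).symm
  simp only [Iop_eq, energyE, pd, e3, Complex.normSq_eq_norm_sq, EuclideanSpace.basisFun_apply,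
    SchwartzMap.lineDerivOp_apply_eq_fderiv]

end IsCutoff

theorem energy_I_upper_bound_general {s : ℝ} (hs0 : 0 ≤ s) (hs1 : s < 1) {η : ℝ → ℝ}
    (hη : IsCutoff s η) (b : OrthonormalBasis ι ℝ V) :
    ∃ C > (0 : ℝ), ∀ N > 0, ∀ g : 𝓢(V, H),
      ∫ x, 1 / 2 * ∑ i, ‖∂_{b i} (smoothingCLM H η N g) x‖ ^ 2 +
          1 / 4 * ‖smoothingCLM H η N g x‖ ^ 4 ≤
        C * (N ^ (2 * (1 - s)) * (∫ ξ, ‖ξ‖ ^ (2 * s) * ‖𝓕 g ξ‖ ^ 2) + ∫ x, ‖g x‖ ^ 4) := by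
  obtain ⟨A, hA⟩ := hη.exists_forall_integral_norm_smoothingCLM_pow_le (V := V) (F := H) hs1
  refine ⟨(2 * π) ^ 2 * 2 ^ (2 * (1 - s)) + A ^ 4, by positivity, fun N hN g => ?_⟩
  set w := smoothingCLM H η N g
  have kinetic_le := hη.integral_sum_norm_sq_lineDeriv_smoothingCLM_le hs0 hs1 hN b g
  have potential_le := hA N hN 4 four_ne_zero g
  have integrable_kinetic : Integrable fun x => ∑ i, ‖∂_{b i} w x‖ ^ 2 :=
    integrable_finsetSum _ fun i _ => ((∂_{b i} w).memLp 2).integrable_norm_pow two_ne_zero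
  have integrable_potential : Integrable fun x => ‖w x‖ ^ 4 :=
    (w.memLp 4).integrable_norm_pow four_ne_zero
  rw [integral_add (integrable_kinetic.const_mul _) (integrable_potential.const_mul _),
    integral_const_mul, integral_const_mul]
  set X := N ^ (2 * (1 - s)) * ∫ ξ, ‖ξ‖ ^ (2 * s) * ‖𝓕 g ξ‖ ^ 2
  have hX : 0 ≤ X := by positivity
  set T := ∫ x, ‖g x‖ ^ 4
  have hT : 0 ≤ T := by positivity
  set c := (2 * π) ^ 2 * (2 : ℝ) ^ (2 * (1 - s))
  have hc : 0 ≤ c := by positivity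
  have hA4 : 0 ≤ A ^ 4 := by positivity
  nlinarith [mul_nonneg hc hX, mul_nonneg hc hT, mul_nonneg hA4 hX, mul_nonneg hA4 hT]

end Energy

/-- Fix `s ∈ (1/2, 1)` and a cutoff `η` for `I_N`.  There is `C > 0`
(depending only on `s, η`) so that for every `N ≥ 1` and every Schwartz `g : ℝ³ → ℂ`,
`E(I_N g) ≤ C ( N^{2(1−s)} ‖g‖²_{Ḣ^s} + ‖g‖⁴_{L⁴} )`. -/
theorem energy_I_upper_bound
    (s : ℝ) (hs : 1/2 < s) (hs1 : s < 1) (η : ℝ → ℝ) (hη : IsCutoff s η) :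
    ∃ C > (0:ℝ), ∀ N ≥ (1:ℝ), ∀ g : SchwartzMap E3 ℂ,
      energyE (Iop η N (fun x => g x))
        ≤ C * (N ^ (2 * (1 - s)) * sobSq s (fun x => g x) + ∫ x : E3, ‖g x‖ ^ 4) := by
  obtain ⟨C, hC, energy_le⟩ := energy_I_upper_bound_general (H := ℂ) (by linarith) hs1 hη
    (EuclideanSpace.basisFun (Fin 3) ℝ)
  exact ⟨C, hC, fun N hN g =>
    (hη.energyE_Iop hs1 (by linarith) g).trans_le (energy_le N (by linarith) g)⟩
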